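/- If a group G has a pregroup structure with respect to a finite subset P ⊆ G, then G is virtually free: G contains a free subgroup of finite index. In particular, G is word-hyperbolic. -/

import Mathlib

open Metric Set

section Pregroup

variable {G : Type*} [Group G]

/-- A reduced `P`-product: a nonempty tuple of elements of `P` such that no two
consecutive entries multiply into `P`. -/
def IsReducedProd (P : Set G) (u : List G) : Prop :=
  u ≠ [] ∧ (∀ x ∈ u, x ∈ P) ∧
    ∀ i : ℕ, ∀ h : i + 1 < u.length, u[i]'(Nat.lt_of_succ_lt h) * u[i + 1]'h ∉ P

/-- `G` has a pregroup structure with respect to the subset `P ⊆ G`. -/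
structure IsPregroupStructure (P : Set G) : Prop where
  one_mem : (1 : G) ∈ P
  inv_mem : ∀ x ∈ P, x⁻¹ ∈ P
  p5 : ∀ u ∈ P, ∀ v ∈ P, ∀ w ∈ P, ∀ z ∈ P,
    u * v ∈ P → v * w ∈ P → w * z ∈ P → u * v * w ∈ P ∨ v * w * z ∈ P
  exists_rep : ∀ g : G, ∃ u : List G, IsReducedProd P u ∧ u.prod = g
  uniq : ∀ u v : List G, IsReducedProd P u → IsReducedProd P v → u.prod = v.prod →
    u.length = v.length ∧
      ∃ a : ℕ → G, a 0 = 1 ∧ a u.length = 1 ∧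
        (∀ i : ℕ, 0 < i → i < u.length → a i ∈ P) ∧
        ∀ i : ℕ, ∀ hu : i < u.length, ∀ hv : i < v.length,
          (a i)⁻¹ * u[i] * a (i + 1) ∈ P ∧ v[i] = (a i)⁻¹ * u[i] * a (i + 1)

/-- `B_P = {b ∈ P : zb ∈ P and bz ∈ P for all z ∈ P}`. -/
def BP (P : Set G) : Set G :=
  {b | b ∈ P ∧ ∀ z ∈ P, z * b ∈ P ∧ b * z ∈ P}

/-- Axiom (P6). -/
def AxiomP6 (P : Set G) : Prop :=
  ∀ x ∈ P, ∀ y ∈ P, x * y ∉ P → ∀ a ∈ P, x * a ∈ P → a⁻¹ * y ∈ P → a ∈ BP P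

/-- Axiom (H0): `B_P` is finite. -/
def AxiomH0 (P : Set G) : Prop := (BP P).Finite

end Pregroup

section Geometry

variable {X : Type*} [MetricSpace X]

/-- A geodesic parametrization (by arclength on `[0, dist x y]`) from `x` to `y`. -/
def IsGeodesicParam (f : ℝ → X) (x y : X) : Prop :=
  f 0 = x ∧ f (dist x y) = y ∧
    ∀ a ∈ Icc (0 : ℝ) (dist x y), ∀ b ∈ Icc (0 : ℝ) (dist x y),
      dist (f a) (f b) = |a - b|

/-- `s` is a geodesic segment from `x` to `y`. -/
def IsGeodesicSegment (s : Set X) (x y : X) : Prop :=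
  ∃ f : ℝ → X, IsGeodesicParam f x y ∧ s = f '' Icc (0 : ℝ) (dist x y)

/-- A geodesic metric space: any two points are joined by a geodesic segment. -/
def IsGeodesicSpace (X : Type*) [MetricSpace X] : Prop :=
  ∀ x y : X, ∃ s : Set X, IsGeodesicSegment s x y

/-- A triangle with sides `s, t, r` is `C`-thin: each side lies in the closed
`C`-neighborhood of the union of the other two sides. -/
def ThinTriangle (C : ℝ) (s t r : Set X) : Prop :=
  s ⊆ cthickening C (t ∪ r) ∧ t ⊆ cthickening C (s ∪ r) ∧ r ⊆ cthickening C (s ∪ t)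

end Geometry

section Cayley

variable {G : Type*} [Group G] {X : Type*} [MetricSpace X]

/-- The word length of `g` with respect to the generating set `S`. -/
noncomputable def wordLength (S : Set G) (g : G) : ℕ :=
  sInf {n | ∃ l : List G, l.length = n ∧ (∀ x ∈ l, x ∈ S ∨ x⁻¹ ∈ S) ∧ l.prod = g}

/-- `ι : G → X` realizes the geodesic metric space `X` as the Cayley graph
`Γ(G,S)`: `S` generates `G`, the metric on vertices is the word metric, `X` is a
geodesic space, and every point of `X` is within `1/2` of a vertex. -/
structure IsCayleyGraph (S : Set G) (ι : G → X) : Prop where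
  generates : Subgroup.closure S = ⊤
  dist_eq : ∀ g h : G, dist (ι g) (ι h) = wordLength S (g⁻¹ * h)
  geodesic : IsGeodesicSpace X
  dense : ∀ x : X, ∃ g : G, dist x (ι g) ≤ 1 / 2

/-- Axiom (H1), with constant `C₁`: geodesic triangles on vertices `1, p, pq`
(`p, q ∈ P`) are `C₁`-thin. -/
def AxiomH1 (P : Set G) (ι : G → X) (C₁ : ℝ) : Prop :=
  ∀ p ∈ P, ∀ q ∈ P, ∀ s t r : Set X,
    IsGeodesicSegment s (ι 1) (ι p) → IsGeodesicSegment t (ι p) (ι (p * q)) →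
      IsGeodesicSegment r (ι 1) (ι (p * q)) → ThinTriangle C₁ s t r

/-- Axiom (H2), with constant `C₂`: if the Gromov product `(p⁻¹ · q)_1` exceeds
`C₂` then `pq ∈ P`. -/
def AxiomH2 (P : Set G) (ι : G → X) (C₂ : ℝ) : Prop :=
  ∀ p ∈ P, ∀ q ∈ P,
    (dist (ι 1) (ι p) + dist (ι 1) (ι q) - dist (ι p⁻¹) (ι q)) / 2 > C₂ → p * q ∈ P

/-- Axiom (H3), with constant `C₃`: every vertex on a geodesic from `1` to `p ∈ P`
is a reduced product `p₁ p₂` with `|p₂| ≤ C₃`. -/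
def AxiomH3 (P : Set G) (ι : G → X) (C₃ : ℝ) : Prop :=
  ∀ p ∈ P, ∀ s : Set X, IsGeodesicSegment s (ι 1) (ι p) →
    ∀ x : G, ι x ∈ s →
      ∃ p₁ p₂ : G, IsReducedProd P [p₁, p₂] ∧ p₁ * p₂ = x ∧ dist (ι 1) (ι p₂) ≤ C₃

/-- The path in `Γ(G,S)` defined by the `P`-product `u` based at `x`: a
concatenation of geodesic segments `[x u(i), x u(i+1)]`. -/
def IsPathOf (ι : G → X) (x : G) (u : List G) (pa : Set X) : Prop :=
  ∃ segs : Fin u.length → Set X,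
    (∀ i : Fin u.length,
      IsGeodesicSegment (segs i)
        (ι (x * (u.take i.1).prod)) (ι (x * (u.take (i.1 + 1)).prod))) ∧
    pa = ⋃ i, segs i

end Cayley

section PartA

open scoped Pointwise

variable {G : Type*} [Group G] {P : Set G}

def GAdj (P : Set G) (g h : G) : Prop := g⁻¹ * h ∈ P

theorem GAdj.rfl' (hP : IsPregroupStructure P) (g : G) : GAdj P g g := by
  simpa [GAdj] using hP.one_mem

theorem GAdj.symm' (hP : IsPregroupStructure P) {g h : G} (a : GAdj P g h) : GAdj P h g := by
  simpa [GAdj] using hP.inv_mem _ a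

theorem gadj_mul (k g h : G) : GAdj P (k * g) (k * h) ↔ GAdj P g h := by
  simp [GAdj, mul_assoc]

/-- gem-freeness -/
theorem gem (hP : IsPregroupStructure P) {v a b c d : G} (va : GAdj P v a) (vb : GAdj P v b)
    (vc : GAdj P v c) (vd : GAdj P v d) (ab : GAdj P a b) (bc : GAdj P b c) (cd : GAdj P c d) :
    GAdj P a c ∨ GAdj P b d := by
  have := hP.p5 (a⁻¹ * b) ab (b⁻¹ * v) (vb.symm' hP) (v⁻¹ * c) vc (c⁻¹ * d) cd
    (by simpa [mul_assoc, GAdj] using va.symm' hP) (by simpa [mul_assoc, GAdj] using bc)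
    (by simpa [mul_assoc, GAdj] using vd)
  simpa [mul_assoc, GAdj] using this

/-- adjacent neighbours have comparable neighbourhoods -/
theorem nested (hP : IsPregroupStructure P) {v b c : G} (vb : GAdj P v b) (vc : GAdj P v c)
    (bc : GAdj P b c) :
    (∀ m, GAdj P v m → GAdj P b m → GAdj P c m) ∨ (∀ m, GAdj P v m → GAdj P c m → GAdj P b m) := by
  by_contra! h
  obtain ⟨⟨p, h1, h2, h3⟩, ⟨q, h4, h5, h6⟩⟩ := h
  rcases gem hP h1 vb vc h4 (h2.symm' hP) bc h5 with h | h
  · exact h3 (h.symm' hP)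
  · exact h6 h

def gcl (P : Set G) (g h : G) : Set G := {k | ∀ m, GAdj P g m → GAdj P h m → GAdj P k m}

theorem left_mem_gcl (g h : G) : g ∈ gcl P g h := fun _ h _ => h
theorem right_mem_gcl (g h : G) : h ∈ gcl P g h := fun _ _ h => h

theorem gcl_adj_left (hP : IsPregroupStructure P) {g h k : G} (gh : GAdj P g h)
    (hk : k ∈ gcl P g h) : GAdj P g k := (hk g (GAdj.rfl' hP g) (gh.symm' hP)).symm' hP
theorem gcl_adj_right (hP : IsPregroupStructure P) {g h k : G} (gh : GAdj P g h)
    (hk : k ∈ gcl P g h) : GAdj P h k := (hk h gh (GAdj.rfl' hP h)).symm' hP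

theorem gcl_clique (hP : IsPregroupStructure P) {g h k l : G} (gh : GAdj P g h)
    (hk : k ∈ gcl P g h) (hl : l ∈ gcl P g h) : GAdj P k l :=
  hk l (gcl_adj_left hP gh hl) (gcl_adj_right hP gh hl)

theorem gcl_subset {g h k l : G}
    (hk : k ∈ gcl P g h) (hl : l ∈ gcl P g h) : gcl P k l ⊆ gcl P g h :=
  fun _ hm n h1 h2 => hm n (hk n h1 h2) (hl n h1 h2)

theorem gcl_symm (g h : G) : gcl P g h = gcl P h g := by
  ext k; exact ⟨fun H m a b => H m b a, fun H m a b => H m b a⟩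

theorem smul_gcl (k g h : G) : k • gcl P g h = gcl P (k * g) (k * h) := by
  ext x
  rw [Set.mem_smul_set_iff_inv_smul_mem]
  simp only [gcl, Set.mem_ofPred_eq, smul_eq_mul]
  constructor
  · intro H m h1 h2
    have := H (k⁻¹ * m) (by rw [← gadj_mul k]; simpa using h1) (by rw [← gadj_mul k]; simpa using h2)
    rw [← gadj_mul k] at this; simpa using this
  · intro H m h1 h2
    rw [← gadj_mul k]
    simpa using H (k * m) (by rwa [gadj_mul]) (by rwa [gadj_mul])

/-- vertices of the tree -/
def TV (P : Set G) : Set (Set G) := {C | ∃ g h, GAdj P g h ∧ C = gcl P g h}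

theorem smul_TV {C : Set G} (k : G) (hC : C ∈ TV P) : k • C ∈ TV P := by
  obtain ⟨g, h, a, rfl⟩ := hC
  exact ⟨k * g, k * h, by rwa [gadj_mul], smul_gcl k g h⟩

theorem TV_clique (hP : IsPregroupStructure P) {C : Set G} (hC : C ∈ TV P) {g h : G} (hg : g ∈ C)
    (hh : h ∈ C) : GAdj P g h := by
  obtain ⟨a, b, ab, rfl⟩ := hC
  exact gcl_clique hP ab hg hh

theorem TV_sub {C : Set G} (hC : C ∈ TV P) {g h : G} (hg : g ∈ C)
    (hh : h ∈ C) : gcl P g h ⊆ C := by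
  obtain ⟨a, b, ab, rfl⟩ := hC
  exact gcl_subset hg hh

theorem TV_nonempty {C : Set G} (hC : C ∈ TV P) : C.Nonempty := by
  obtain ⟨a, b, ab, rfl⟩ := hC
  exact ⟨a, left_mem_gcl a b⟩

theorem TV_finite (hP : IsPregroupStructure P) (hf : P.Finite) {C : Set G} (hC : C ∈ TV P) :
    C.Finite ∧ C.ncard ≤ P.ncard := by
  obtain ⟨g, hg⟩ := TV_nonempty hC
  have hsub : C ⊆ (fun p => g * p) '' P := fun h hh =>
    ⟨g⁻¹ * h, TV_clique hP hC hg hh, by simp⟩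
  exact ⟨(hf.image _).subset hsub,
    (Set.ncard_le_ncard hsub (hf.image _)).trans (Set.ncard_image_le hf)⟩

theorem TV_rep (hP : IsPregroupStructure P) {C : Set G} (hC : C ∈ TV P) {g : G} (hg : g ∈ C) :
    ∃ x ∈ C, C = gcl P g x := by
  obtain ⟨a, b, ab, rfl⟩ := hC
  have ga := (gcl_adj_left hP ab hg).symm' hP
  have gb := (gcl_adj_right hP ab hg).symm' hP
  rcases nested hP ga gb ab with h | h
  · refine ⟨a, left_mem_gcl a b, subset_antisymm ?_ (gcl_subset hg (left_mem_gcl a b))⟩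
    exact gcl_subset (right_mem_gcl g a) (fun m h1 h2 => h m h1 h2)
  · refine ⟨b, right_mem_gcl a b, subset_antisymm ?_ (gcl_subset hg (right_mem_gcl a b))⟩
    exact gcl_subset (fun m h1 h2 => h m h1 h2) (right_mem_gcl g b)

theorem TV_comparable (hP : IsPregroupStructure P) {A B C : Set G} (hA : A ∈ TV P) (hB : B ∈ TV P)
    (hC : C ∈ TV P) (hAC : A ⊆ C) (hBC : B ⊆ C) {g : G} (gA : g ∈ A) (gB : g ∈ B) :
    A ⊆ B ∨ B ⊆ A := by
  obtain ⟨x, hx, rfl⟩ := TV_rep hP hA gA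
  obtain ⟨y, hy, rfl⟩ := TV_rep hP hB gB
  have gx := TV_clique hP hC (hAC gA) (hAC hx)
  have gy := TV_clique hP hC (hAC gA) (hBC hy)
  have xy := TV_clique hP hC (hAC hx) (hBC hy)
  rcases nested hP gx gy xy with h | h
  · right; exact gcl_subset gA (fun m h1 h2 => h m h1 h2)
  · left; exact gcl_subset gB (fun m h1 h2 => h m h1 h2)

theorem triangle (hP : IsPregroupStructure P) {g h k : G} (gh : GAdj P g h) (hk : GAdj P h k)
    (gk : GAdj P g k) : ∃ C ∈ TV P, g ∈ C ∧ h ∈ C ∧ k ∈ C := by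
  rcases nested hP gh gk hk with H | H
  · exact ⟨_, ⟨g, h, gh, rfl⟩, left_mem_gcl _ _, right_mem_gcl _ _, fun m h1 h2 => H m h1 h2⟩
  · exact ⟨_, ⟨g, k, gk, rfl⟩, left_mem_gcl _ _, fun m h1 h2 => H m h1 h2, right_mem_gcl _ _⟩

/-- covering relation -/
def TCov (P : Set G) (A C : Set G) : Prop :=
  A ∈ TV P ∧ C ∈ TV P ∧ A ⊂ C ∧ ∀ D ∈ TV P, A ⊆ D → D ⊂ C → D = A

theorem smul_TCov {A C : Set G} (k : G) (h : TCov P A C) : TCov P (k • A) (k • C) := by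
  obtain ⟨h1, h2, h3, h4⟩ := h
  refine ⟨smul_TV k h1, smul_TV k h2, ?_, ?_⟩
  · rw [ssubset_iff_subset_not_subset] at h3 ⊢
    simpa [Set.smul_set_subset_smul_set_iff] using h3
  · intro D hD hAD hDC
    have := h4 (k⁻¹ • D) (smul_TV _ hD) (by rwa [Set.subset_smul_set_iff, inv_inv]) (by
      rw [ssubset_iff_subset_not_subset] at hDC ⊢
      exact ⟨by rw [← Set.subset_smul_set_iff]; exact hDC.1,
        by rw [← Set.smul_set_subset_iff_subset_inv_smul_set]; exact hDC.2⟩)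
    rw [← this, smul_inv_smul]

theorem exists_pred (hP : IsPregroupStructure P) (hf : P.Finite) {A C : Set G} (hA : A ∈ TV P)
    (hC : C ∈ TV P) (hAC : A ⊂ C) : ∃ B, A ⊆ B ∧ TCov P B C := by
  have hfin : {B | B ∈ TV P ∧ A ⊆ B ∧ B ⊂ C}.Finite :=
    (TV_finite hP hf hC).1.finite_subsets.subset fun B hB => hB.2.2.1
  obtain ⟨B, hAB, hB⟩ := hfin.exists_le_maximal (a := A) ⟨hA, subset_rfl, hAC⟩
  refine ⟨B, hB.prop.2.1, hB.prop.1, hC, hB.prop.2.2, fun D hD hBD hDC => ?_⟩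
  exact (hB.eq_of_le ⟨hD, hB.prop.2.1.trans hBD, hDC⟩ hBD).symm

theorem pred_unique (hP : IsPregroupStructure P) {A B C : Set G} (hA : TCov P A C)
    (hB : TCov P B C) {g : G} (gA : g ∈ A) (gB : g ∈ B) : A = B := by
  rcases TV_comparable hP hA.1 hB.1 hA.2.1 hA.2.2.1.1 hB.2.2.1.1 gA gB with h | h
  · exact (hA.2.2.2 B hB.1 h hB.2.2.1).symm
  · exact hB.2.2.2 A hA.1 h hA.2.2.1

end PartA
section PartB

open scoped Pointwise

variable {G : Type*} [Group G] {P : Set G}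

theorem not_reduced_split {l : List G} (hne : l ≠ []) (hl : ∀ x ∈ l, x ∈ P)
    (h : ¬ IsReducedProd P l) : ∃ l1 a b l2, l = l1 ++ a :: b :: l2 ∧ a * b ∈ P := by
  have : ∃ i : ℕ, ∃ h : i + 1 < l.length, l[i]'(Nat.lt_of_succ_lt h) * l[i + 1]'h ∈ P := by
    by_contra! H
    exact h ⟨hne, hl, H⟩
  obtain ⟨i, hi, hm⟩ := this
  refine ⟨l.take i, _, _, l.drop (i + 2), ?_, hm⟩
  rw [← List.drop_eq_getElem_cons, ← List.drop_eq_getElem_cons, List.take_append_drop]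

theorem reduced_one (hP : IsPregroupStructure P) : IsReducedProd P [1] := by
  refine ⟨by simp, by simpa using hP.one_mem, fun i h => ?_⟩
  simp at h

variable {M : Type*} [Group M]

def hol (θ : G → G → M) : List G → G → M
  | [], _ => 1
  | u :: l, g => hol θ l (g * u) * θ g (g * u)

theorem hol_append (θ : G → G → M) (l l' : List G) (g : G) :
    hol θ (l ++ l') g = hol θ l' (g * l.prod) * hol θ l g := by
  induction l generalizing g with
  | nil => simp [hol]
  | cons u l ih => simp [hol, ih, mul_assoc]

theorem hol_closed (hP : IsPregroupStructure P) (θ : G → G → M)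
    (hθ1 : ∀ g, θ g g = 1)
    (hθ : ∀ g h k, GAdj P g h → GAdj P h k → GAdj P g k → θ h k * θ g h = θ g k)
    (n : ℕ) : ∀ l : List G, l.length = n → (∀ x ∈ l, x ∈ P) → l.prod = 1 → ∀ g, hol θ l g = 1 := by
  induction n with
  | zero =>
    intro l hl _ _ g
    rw [List.length_eq_zero_iff] at hl
    subst hl; rfl
  | succ n ih =>
    intro l hl hlP hprod g
    by_cases hr : IsReducedProd P l
    · have h1 := (hP.uniq l [1] hr (reduced_one hP) (by simpa using hprod)).1
      rw [List.length_singleton, List.length_eq_one_iff] at h1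
      obtain ⟨a, rfl⟩ := h1
      have : a = 1 := by simpa using hprod
      subst this
      simp [hol, hθ1]
    · have hne : l ≠ [] := by rintro rfl; simp at hl
      obtain ⟨l1, a, b, l2, rfl, hab⟩ := not_reduced_split hne hlP hr
      have := ih (l1 ++ (a * b) :: l2) (by simp at hl ⊢; omega) (by
        intro x hx
        simp only [List.mem_append, List.mem_cons] at hx
        rcases hx with hx | rfl | hx
        · exact hlP x (by simp [hx])
        · exact hab
        · exact hlP x (by simp [hx])) (by simpa [mul_assoc] using hprod) g
      rw [← this, hol_append, hol_append]
      congr 1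
      simp only [hol, mul_assoc]
      congr 1
      apply hθ
      · simpa [GAdj] using hlP a (by simp)
      · simpa [GAdj, mul_assoc] using hlP b (by simp)
      · simpa [GAdj, mul_assoc] using hab

theorem exists_pot_G (hP : IsPregroupStructure P) (θ : G → G → M)
    (hθ1 : ∀ g, θ g g = 1)
    (hθ : ∀ g h k, GAdj P g h → GAdj P h k → GAdj P g k → θ h k * θ g h = θ g k) :
    ∃ U : G → M, ∀ g h, GAdj P g h → U h = θ g h * U g := by
  have hrep : ∀ g : G, ∃ l : List G, (∀ x ∈ l, x ∈ P) ∧ l.prod = g := fun g => by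
    obtain ⟨u, hu, h⟩ := hP.exists_rep g
    exact ⟨u, hu.2.1, h⟩
  choose L hL hLp using hrep
  have hc := fun l => hol_closed hP θ hθ1 hθ _ l rfl
  refine ⟨fun g => hol θ (L g) 1, fun g h gh => ?_⟩
  have key : ∀ r : List G, (∀ x ∈ r, x ∈ P) → ∀ s : List G, (∀ x ∈ s, x ∈ P) →
      r.prod = s.prod → hol θ r 1 = hol θ s 1 := by
    intro r hr s hs hrs
    have hq := hLp s.prod⁻¹
    have h1 := hc (r ++ L s.prod⁻¹) (by
      intro x hx; rcases List.mem_append.1 hx with h | h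
      · exact hr x h
      · exact hL _ x h) (by simp [hq, hrs]) 1
    have h2 := hc (s ++ L s.prod⁻¹) (by
      intro x hx; rcases List.mem_append.1 hx with h | h
      · exact hs x h
      · exact hL _ x h) (by simp [hq]) 1
    rw [hol_append] at h1 h2
    rw [hrs, ← h2] at h1
    exact mul_left_cancel h1
  have := key (L h) (hL h) (L g ++ [g⁻¹ * h]) (by
      intro x hx; rcases List.mem_append.1 hx with h' | h'
      · exact hL _ x h'
      · rw [List.mem_singleton] at h'; rw [h']; exact gh) (by simp [hLp])
  simp only [this, hol_append, hol]
  simp [hLp]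

open Classical in
/-- predecessor of `C` containing `g` -/
noncomputable def gpr (P : Set G) (g : G) (C : Set G) : Set G :=
  if h : ∃ A, TCov P A C ∧ g ∈ A then h.choose else C

open Classical in
noncomputable def gT (P : Set G) (τ : Set G → Set G → M) : ℕ → G → Set G → M
  | 0, _, _ => 1
  | n + 1, g, C => if ∃ A, TCov P A C ∧ g ∈ A then τ (gpr P g C) C * gT P τ n g (gpr P g C) else 1

theorem gT_stable (hP : IsPregroupStructure P) (hf : P.Finite) (τ : Set G → Set G → M) (n : ℕ) :
    ∀ m (g : G) (C : Set G), C ∈ TV P → C.ncard ≤ n → C.ncard ≤ m → gT P τ n g C = gT P τ m g C := by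
  have hpos : ∀ C ∈ TV P, 0 < C.ncard := fun C hC =>
    (Set.ncard_pos (TV_finite hP hf hC).1).2 (TV_nonempty hC)
  induction n with
  | zero => intro m g C hC h; have := hpos C hC; omega
  | succ n ih =>
    intro m g C hC h1 h2
    have := hpos C hC
    obtain ⟨m, rfl⟩ : ∃ k, m = k + 1 := ⟨m - 1, by omega⟩
    simp only [gT]
    split_ifs with h
    · have hs : TCov P (gpr P g C) C := by
        unfold gpr; rw [dif_pos h]; exact h.choose_spec.1
      have := Set.ncard_lt_ncard hs.2.2.1 (TV_finite hP hf hC).1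
      rw [ih m g _ hs.1 (by omega) (by omega)]
    · rfl

theorem gT_cov (hP : IsPregroupStructure P) (hf : P.Finite) (τ : Set G → Set G → M)
    {A C : Set G} (h : TCov P A C) {g : G} (hg : g ∈ A) :
    gT P τ P.ncard g C = τ A C * gT P τ P.ncard g A := by
  have hC := TV_finite hP hf h.2.1
  have hA := TV_finite hP hf h.1
  have hex : ∃ A, TCov P A C ∧ g ∈ A := ⟨A, h, hg⟩
  have hpr : gpr P g C = A := by
    unfold gpr; rw [dif_pos hex]
    exact pred_unique hP hex.choose_spec.1 h hex.choose_spec.2 hg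
  rw [gT_stable hP hf τ _ (P.ncard + 1) g C h.2.1 hC.2 (by omega)]
  simp only [gT]
  rw [if_pos hex, hpr]

theorem gT_consist (hP : IsPregroupStructure P) (hf : P.Finite) (τ : Set G → Set G → M) (n : ℕ) :
    ∀ A C : Set G, A ∈ TV P → C ∈ TV P → A ⊆ C → C.ncard ≤ n → ∀ g ∈ A, ∀ h ∈ A,
    (gT P τ P.ncard h A)⁻¹ * gT P τ P.ncard g A = (gT P τ P.ncard h C)⁻¹ * gT P τ P.ncard g C := by
  induction n with
  | zero =>
    intro A C _ hC _ h
    have := (Set.ncard_pos (TV_finite hP hf hC).1).2 (TV_nonempty hC)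
    omega
  | succ n ih =>
    intro A C hA hC hAC hn g hg h hh
    rcases eq_or_ne A C with rfl | hne
    · rfl
    · obtain ⟨B, hAB, hB⟩ := exists_pred hP hf hA hC (hAC.ssubset_of_ne hne)
      have := Set.ncard_lt_ncard hB.2.2.1 (TV_finite hP hf hC).1
      rw [ih A B hA hB.1 hAB (by omega) g hg h hh, gT_cov hP hf τ hB (hAB hg),
        gT_cov hP hf τ hB (hAB hh)]
      group

theorem exists_pot (hP : IsPregroupStructure P) (hf : P.Finite) (τ : Set G → Set G → M) :
    ∃ U : Set G → M, ∀ A C, TCov P A C → U C = τ A C * U A := by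
  set T := gT P τ P.ncard with hT
  let θ : G → G → M := fun g h => (T h (gcl P g h))⁻¹ * T g (gcl P g h)
  have hθ : ∀ C ∈ TV P, ∀ g ∈ C, ∀ h ∈ C, θ g h = (T h C)⁻¹ * T g C := fun C hC g hg h hh =>
    gT_consist hP hf τ _ _ C ⟨g, h, TV_clique hP hC hg hh, rfl⟩ hC (TV_sub hC hg hh) le_rfl
      g (left_mem_gcl g h) h (right_mem_gcl g h)
  obtain ⟨U, hU⟩ := exists_pot_G hP θ (fun g => by simp [θ]) (fun g h k gh hk gk => by
    obtain ⟨C, hC, h1, h2, h3⟩ := triangle hP gh hk gk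
    rw [hθ C hC h h2 k h3, hθ C hC g h1 h h2, hθ C hC g h1 k h3]
    group)
  classical
  let V : Set G → M := fun C => if h : C.Nonempty then T h.choose C * U h.choose else 1
  have hV : ∀ C ∈ TV P, ∀ g ∈ C, V C = T g C * U g := by
    intro C hC g hg
    have hne : C.Nonempty := ⟨g, hg⟩
    simp only [V, dif_pos hne]
    rw [hU g _ (TV_clique hP hC hg hne.choose_spec), hθ C hC g hg _ hne.choose_spec]
    group
  refine ⟨V, fun A C h => ?_⟩
  obtain ⟨g, hg⟩ := TV_nonempty h.1
  rw [hV A h.1 g hg, hV C h.2.1 g (h.2.2.1.1 hg), hT, gT_cov hP hf τ h hg, mul_assoc]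

/-- the Hasse graph -/
def hasseG (P : Set G) : SimpleGraph (Set G) where
  Adj A C := TCov P A C ∨ TCov P C A
  symm := ⟨fun _ _ h => h.symm⟩
  loopless := ⟨fun _ h => by rcases h with h | h <;> exact h.2.2.1.ne rfl⟩

theorem reach_sub (hP : IsPregroupStructure P) (hf : P.Finite) (n : ℕ) :
    ∀ A C : Set G, A ∈ TV P → C ∈ TV P → A ⊆ C → C.ncard ≤ n → (hasseG P).Reachable A C := by
  induction n with
  | zero =>
    intro A C _ hC _ h
    have := (Set.ncard_pos (TV_finite hP hf hC).1).2 (TV_nonempty hC)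
    omega
  | succ n ih =>
    intro A C hA hC hAC hn
    rcases eq_or_ne A C with rfl | hne
    · rfl
    · obtain ⟨B, hAB, hB⟩ := exists_pred hP hf hA hC (hAC.ssubset_of_ne hne)
      have := Set.ncard_lt_ncard hB.2.2.1 (TV_finite hP hf hC).1
      refine (ih A B hA hB.1 hAB (by omega)).trans (SimpleGraph.Adj.reachable ?_)
      exact Or.inl hB

theorem hasse_conn (hP : IsPregroupStructure P) (hf : P.Finite) {A C : Set G} (hA : A ∈ TV P)
    (hC : C ∈ TV P) : (hasseG P).Reachable A C := by
  have hself : ∀ g : G, gcl P g g ∈ TV P := fun g => ⟨g, g, GAdj.rfl' hP g, rfl⟩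
  have h1 : ∀ C ∈ TV P, ∀ g ∈ C, (hasseG P).Reachable (gcl P g g) C := fun C hC g hg =>
    reach_sub hP hf _ _ C (hself g) hC (TV_sub hC hg hg) le_rfl
  have h2 : ∀ l : List G, (∀ x ∈ l, x ∈ P) → ∀ g : G,
      (hasseG P).Reachable (gcl P g g) (gcl P (g * l.prod) (g * l.prod)) := by
    intro l
    induction l with
    | nil => intro _ g; simp
    | cons u l ih =>
      intro hl g
      have hadj : GAdj P g (g * u) := by simpa [GAdj] using hl u (by simp)
      have := ih (fun x hx => hl x (by simp [hx])) (g * u)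
      rw [List.prod_cons, ← mul_assoc]
      refine SimpleGraph.Reachable.trans ?_ this
      have hV : gcl P g (g * u) ∈ TV P := ⟨_, _, hadj, rfl⟩
      exact (h1 _ hV g (left_mem_gcl _ _)).trans (h1 _ hV _ (right_mem_gcl _ _)).symm
  obtain ⟨g, hg⟩ := TV_nonempty hA
  obtain ⟨h, hh⟩ := TV_nonempty hC
  obtain ⟨l, hl, hp⟩ := hP.exists_rep (g⁻¹ * h)
  have := h2 l hl.2.1 g
  rw [hp, mul_inv_cancel_left] at this
  exact (h1 A hA g hg).symm.trans (this.trans (h1 C hC h hh))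

end PartB
section PartC

open scoped Pointwise

variable {G : Type*} [Group G] {P : Set G} {M : Type*} [Group M]

theorem exists_holhom (hP : IsPregroupStructure P) (hf : P.Finite) (H : Subgroup G)
    (τ : Set G → Set G → M) (Φ : G → Set G → M)
    (hτ : ∀ k ∈ H, ∀ A C, TCov P A C → τ (k • A) (k • C) * Φ k A = Φ k C * τ A C)
    (hΦ : ∀ k ∈ H, ∀ l ∈ H, ∀ C ∈ TV P, Φ (k * l) C = Φ k (l • C) * Φ l C)
    (U : Set G → M) (hU : ∀ A C, TCov P A C → U C = τ A C * U A) :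
    ∃ ψ : H →* M, ∀ k : H, ∀ C ∈ TV P, U ((k : G) • C) = Φ k C * U C * (ψ k)⁻¹ := by
  let f : G → Set G → M := fun k C => (U C)⁻¹ * (Φ k C)⁻¹ * U (k • C)
  have hcov : ∀ k ∈ H, ∀ A C, TCov P A C → f k A = f k C := by
    intro k hk A C h
    have h1 := hU _ _ (smul_TCov k h)
    have h2 := hτ k hk A C h
    simp only [f]
    rw [h1, hU A C h]
    rw [show τ (k • A) (k • C) = Φ k C * τ A C * (Φ k A)⁻¹ by rw [← h2]; group]
    group
  have hconst : ∀ k ∈ H, ∀ A ∈ TV P, ∀ C ∈ TV P, f k A = f k C := by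
    intro k hk A hA C hC
    obtain ⟨w⟩ := hasse_conn hP hf hA hC
    clear hA hC
    induction w with
    | nil => rfl
    | cons h _ ih =>
      rw [← ih]
      rcases h with h | h
      · exact hcov k hk _ _ h
      · exact (hcov k hk _ _ h).symm
  have hC0 : gcl P (1 : G) 1 ∈ TV P := ⟨1, 1, GAdj.rfl' hP 1, rfl⟩
  have hmul : ∀ k ∈ H, ∀ l ∈ H, f (k * l) (gcl P 1 1) = f l (gcl P 1 1) * f k (gcl P 1 1) := by
    intro k hk l hl
    rw [hconst k hk _ hC0 (l • gcl P 1 1) (smul_TV l hC0)]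
    simp only [f]
    rw [hΦ k hk l hl _ hC0, mul_smul]
    group
  refine ⟨MonoidHom.mk' (fun k => (f k (gcl P 1 1))⁻¹) ?_, ?_⟩
  · intro k l
    simp [hmul k k.2 l l.2]
  · intro k C hC
    simp only [MonoidHom.mk'_apply, inv_inv]
    rw [hconst k k.2 _ hC0 C hC]
    simp only [f]
    group

/-- freeness of homs to permutation groups -/
theorem free_perm_exists (K : Type*) [Group K] [Finite K] (n : ℕ) (h : Nat.card K ∣ n) :
    ∃ ρ : K →* Equiv.Perm (Fin n), ∀ k, k ≠ 1 → ∀ x, ρ k x ≠ x := by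
  obtain ⟨m, rfl⟩ := h
  have e : K × Fin m ≃ Fin (Nat.card K * m) :=
    Finite.equivFinOfCardEq (by simp [Nat.card_prod])
  let a : K →* Equiv.Perm (K × Fin m) :=
    MonoidHom.mk' (fun k => (Equiv.mulLeft k).prodCongr (Equiv.refl _)) (by
      intro k l; ext x <;> simp [mul_assoc])
  refine ⟨(Equiv.permCongrHom e).toMonoidHom.comp a, ?_⟩
  intro k hk x hx
  have hx' : e (a k (e.symm x)) = x := hx
  have := congrArg (fun y => (e.symm y).1) hx'
  simp [a] at this
  exact hk this

theorem free_perm_conj (K : Type*) [Group K] [Finite K] (X : Type*) [Finite X]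
    (ρ₁ ρ₂ : K →* Equiv.Perm X) (h₁ : ∀ k, k ≠ 1 → ∀ x, ρ₁ k x ≠ x)
    (h₂ : ∀ k, k ≠ 1 → ∀ x, ρ₂ k x ≠ x) : ∃ σ : Equiv.Perm X, ∀ k, σ * ρ₁ k = ρ₂ k * σ := by
  have key : ∀ ρ : K →* Equiv.Perm X, (∀ k, k ≠ 1 → ∀ x, ρ k x ≠ x) →
      ∃ (m : ℕ) (e : K × Fin m ≃ X), ∀ k l i, e (k * l, i) = ρ k (e (l, i)) := by
    intro ρ h
    let s : Setoid X := ⟨fun x y => ∃ k, ρ k x = y, fun x => ⟨1, by simp⟩,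
      fun {x y} ⟨k, hk⟩ => ⟨k⁻¹, by rw [← hk]; simp⟩,
      fun {x y z} ⟨k, hk⟩ ⟨l, hl⟩ => ⟨l * k, by rw [map_mul, Equiv.Perm.mul_apply, hk, hl]⟩⟩
    obtain ⟨m, ⟨q⟩⟩ := Finite.exists_equiv_fin (Quotient s)
    let f : K × Fin m → X := fun z => ρ z.1 (q.symm z.2).out
    have hf : Function.Bijective f := by
      constructor
      · rintro ⟨k, i⟩ ⟨l, j⟩ hkl
        simp only [f] at hkl
        have hij : i = j := by
          apply q.symm.injective
          rw [← Quotient.out_equiv_out]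
          refine ⟨l⁻¹ * k, ?_⟩
          simp [hkl]
        subst hij
        have : l⁻¹ * k = 1 := by
          by_contra hne
          apply h _ hne (q.symm i).out
          simp [hkl]
        rw [inv_mul_eq_one] at this
        rw [this]
      · intro x
        obtain ⟨k, hk⟩ : ∃ k, ρ k (Quotient.mk s x).out = x := Quotient.mk_out (s := s) x
        exact ⟨⟨k, q (Quotient.mk s x)⟩, by simpa [f] using hk⟩
    exact ⟨m, Equiv.ofBijective f hf, fun k l i => by simp [f]⟩
  obtain ⟨m₁, e₁, he₁⟩ := key ρ₁ h₁
  obtain ⟨m₂, e₂, he₂⟩ := key ρ₂ h₂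
  have hm : m₁ = m₂ := by
    have := Nat.card_congr (e₁.trans e₂.symm)
    simp only [Nat.card_prod, Nat.card_fin] at this
    exact Nat.eq_of_mul_eq_mul_left Nat.card_pos this
  subst hm
  refine ⟨e₁.symm.trans e₂, fun k => ?_⟩
  ext x
  obtain ⟨⟨l, i⟩, rfl⟩ := e₁.surjective x
  simp [← he₁, ← he₂]

end PartC
section PartD

open scoped Pointwise

variable {G : Type*} [Group G] {P : Set G}

theorem stab_finite (hP : IsPregroupStructure P) (hf : P.Finite) {C : Set G} (hC : C ∈ TV P) :
    Finite (MulAction.stabilizer G C) ∧ Nat.card (MulAction.stabilizer G C) ∣ P.ncard.factorial := by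
  obtain ⟨hfin, hcard⟩ := TV_finite hP hf hC
  obtain ⟨g, hg⟩ := TV_nonempty hC
  have : Finite C := hfin
  let f : MulAction.stabilizer G C → C := fun k => ⟨(k : G) • g, by
    have := Set.smul_mem_smul_set (a := (k : G)) hg
    rwa [MulAction.mem_stabilizer_iff.1 k.2] at this⟩
  have hinj : Function.Injective f := by
    intro k l h
    have := congrArg Subtype.val h
    simp only [f, smul_eq_mul, mul_left_inj] at this
    exact Subtype.ext this
  have hfs := Finite.of_injective f hinj
  refine ⟨hfs, Nat.dvd_factorial Nat.card_pos ?_⟩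
  exact (Nat.card_le_card_of_injective f hinj).trans (by rwa [Nat.card_coe_set_eq])

theorem orbit_rep (G : Type*) [Group G] (α : Type*) [MulAction G α] :
    ∃ (rep : α → α) (t : α → G), (∀ (g : G) x, rep (g • x) = rep x) ∧ ∀ x, t x • rep x = x := by
  have h : ∀ x : α, ∃ g : G, g • (Quotient.mk (MulAction.orbitRel G α) x).out = x := by
    intro x
    have := Setoid.symm' _ (Quotient.mk_out (s := MulAction.orbitRel G α) x)
    exact this
  choose t ht using h
  refine ⟨fun x => (Quotient.mk (MulAction.orbitRel G α) x).out, t, fun g x => ?_, ht⟩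
  have : Quotient.mk (MulAction.orbitRel G α) (g • x) = Quotient.mk (MulAction.orbitRel G α) x :=
    Quotient.sound ⟨g, rfl⟩
  simp only [this]

theorem exists_cocycle (hP : IsPregroupStructure P) (hf : P.Finite) :
    ∃ Φ : G → Set G → Equiv.Perm (Fin P.ncard.factorial),
      (∀ k l, ∀ C ∈ TV P, Φ (k * l) C = Φ k (l • C) * Φ l C) ∧
      (∀ C ∈ TV P, ∀ k : G, k • C = C → k ≠ 1 → ∀ x, Φ k C x ≠ x) := by
  classical
  set X := Fin P.ncard.factorial
  have h1 : ∀ C : Set G, ∃ r : G → Equiv.Perm X, C ∈ TV P →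
      (∀ k l : G, k • C = C → l • C = C → r (k * l) = r k * r l) ∧
      (∀ k : G, k • C = C → k ≠ 1 → ∀ x, r k x ≠ x) := by
    intro C
    by_cases hC : C ∈ TV P
    · obtain ⟨hfin, hd⟩ := stab_finite hP hf hC
      obtain ⟨ρ, hρ⟩ := free_perm_exists (MulAction.stabilizer G C) _ hd
      refine ⟨fun k => if h : k ∈ MulAction.stabilizer G C then ρ ⟨k, h⟩ else 1, fun _ => ⟨?_, ?_⟩⟩
      · intro k l hk hl
        have hk' : k ∈ MulAction.stabilizer G C := hk
        have hl' : l ∈ MulAction.stabilizer G C := hl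
        simp only [dif_pos hk', dif_pos hl', dif_pos (mul_mem hk' hl')]
        rw [← map_mul]; rfl
      · intro k hk hne x
        have hk' : k ∈ MulAction.stabilizer G C := hk
        simp only [dif_pos hk']
        exact hρ _ (by simpa [Subtype.ext_iff] using hne) x
    · exact ⟨fun _ => 1, fun h => (hC h).elim⟩
  choose r hr using h1
  obtain ⟨rep, t, hrep, ht⟩ := orbit_rep G (Set G)
  have hrepV : ∀ C ∈ TV P, rep C ∈ TV P := by
    intro C hC
    have : rep C = (t C)⁻¹ • C := by rw [eq_inv_smul_iff, ht]
    rw [this]; exact smul_TV _ hC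
  have hst : ∀ (g : G) (C : Set G), ((t (g • C))⁻¹ * g * t C) • rep C = rep C := by
    intro g C
    rw [mul_smul, ht, mul_smul, inv_smul_eq_iff]
    conv_rhs => rw [← hrep g C, ht]
  refine ⟨fun g C => r (rep C) ((t (g • C))⁻¹ * g * t C), ?_, ?_⟩
  · intro k l C hC
    have h2 := hst k (l • C)
    rw [hrep] at h2
    have := (hr _ (hrepV C hC)).1 _ _ h2 (hst l C)
    simp only [hrep]
    rw [← this, mul_smul]
    congr 1
    group
  · intro C hC k hk hne x
    have h2 := hst k C
    refine (hr _ (hrepV C hC)).2 _ h2 ?_ x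
    intro h
    rw [hk] at h
    apply hne
    have : t C * ((t C)⁻¹ * k * t C) * (t C)⁻¹ = 1 := by rw [h]; group
    rw [← this]; group

theorem exists_tau (hP : IsPregroupStructure P) (hf : P.Finite) {X : Type*} [Finite X]
    (Φ : G → Set G → Equiv.Perm X)
    (h1 : ∀ k l, ∀ C ∈ TV P, Φ (k * l) C = Φ k (l • C) * Φ l C)
    (h2 : ∀ C ∈ TV P, ∀ k : G, k • C = C → k ≠ 1 → ∀ x, Φ k C x ≠ x) :
    ∃ τ : Set G → Set G → Equiv.Perm X,
      ∀ k A C, TCov P A C → τ (k • A) (k • C) * Φ k A = Φ k C * τ A C := by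
  have hσ : ∀ z : Set G × Set G, ∃ σ : Equiv.Perm X, TCov P z.1 z.2 →
      ∀ k : G, k • z.1 = z.1 → k • z.2 = z.2 → σ * Φ k z.1 = Φ k z.2 * σ := by
    rintro ⟨A, C⟩
    by_cases h : TCov P A C
    · have hfin := (stab_finite hP hf h.1).1
      let K := MulAction.stabilizer G A ⊓ MulAction.stabilizer G C
      have hK : Finite K := Finite.of_injective (Subgroup.inclusion inf_le_left)
        (Subgroup.inclusion_injective (inf_le_left : K ≤ MulAction.stabilizer G A))
      have hKA : ∀ k : K, (k : G) • A = A := fun k => k.2.1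
      have hKC : ∀ k : K, (k : G) • C = C := fun k => k.2.2
      let ρ₁ : K →* Equiv.Perm X := MonoidHom.mk' (fun k => Φ k A) (fun k l => by
        have := h1 k l A h.1
        rw [hKA] at this; exact this)
      let ρ₂ : K →* Equiv.Perm X := MonoidHom.mk' (fun k => Φ k C) (fun k l => by
        have := h1 k l C h.2.1
        rw [hKC] at this; exact this)
      obtain ⟨σ, hσ⟩ := free_perm_conj K X ρ₁ ρ₂
        (fun k hk x => h2 A h.1 k (hKA k) (by simpa using hk) x)
        (fun k hk x => h2 C h.2.1 k (hKC k) (by simpa using hk) x)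
      exact ⟨σ, fun _ k hk hk' => hσ ⟨k, hk, hk'⟩⟩
    · exact ⟨1, fun h' => (h h').elim⟩
  choose σ hσ using hσ
  obtain ⟨rep, s, hrep, hs⟩ := orbit_rep G (Set G × Set G)
  refine ⟨fun A C => Φ (s (A, C)) (rep (A, C)).2 * σ (rep (A, C)) *
    (Φ (s (A, C)) (rep (A, C)).1)⁻¹, ?_⟩
  intro k A C h
  have e1 : rep (k • A, k • C) = rep (A, C) := hrep k (A, C)
  have e2 := hs (A, C)
  have e3 := hs (k • A, k • C)
  rw [e1] at e3
  simp only [e1]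
  set z := rep (A, C) with hz
  set a := s (A, C)
  set b := s (k • A, k • C)
  have a1 : a • z.1 = A := congrArg Prod.fst e2
  have a2 : a • z.2 = C := congrArg Prod.snd e2
  have b1 : b • z.1 = k • A := congrArg Prod.fst e3
  have b2 : b • z.2 = k • C := congrArg Prod.snd e3
  have hz' : TCov P z.1 z.2 := by
    have := smul_TCov a⁻¹ h
    rwa [← a1, ← a2, inv_smul_smul, inv_smul_smul] at this
  have c1 : (a⁻¹ * k⁻¹ * b) • z.1 = z.1 := by
    rw [mul_smul, b1, mul_smul, inv_smul_smul, ← a1, inv_smul_smul]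
  have c2 : (a⁻¹ * k⁻¹ * b) • z.2 = z.2 := by
    rw [mul_smul, b2, mul_smul, inv_smul_smul, ← a2, inv_smul_smul]
  have hσz := hσ z hz' _ c1 c2
  have d1 : Φ b z.1 = Φ k A * Φ a z.1 * Φ (a⁻¹ * k⁻¹ * b) z.1 := by
    have := h1 (k * a) (a⁻¹ * k⁻¹ * b) z.1 hz'.1
    rw [c1, h1 k a z.1 hz'.1, a1] at this
    rw [← this]; congr 1; group
  have d2 : Φ b z.2 = Φ k C * Φ a z.2 * Φ (a⁻¹ * k⁻¹ * b) z.2 := by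
    have := h1 (k * a) (a⁻¹ * k⁻¹ * b) z.2 hz'.2.1
    rw [c2, h1 k a z.2 hz'.2.1, a2] at this
    rw [← this]; congr 1; group
  have hσz' : Φ (a⁻¹ * k⁻¹ * b) z.2 = σ z * Φ (a⁻¹ * k⁻¹ * b) z.1 * (σ z)⁻¹ := by
    rw [hσz]; group
  rw [d1, d2, hσz']
  group

theorem exists_free_subgroup (hP : IsPregroupStructure P) (hf : P.Finite) :
    ∃ H : Subgroup G, H.FiniteIndex ∧ ∀ k ∈ H, ∀ C ∈ TV P, k • C = C → k = 1 := by
  obtain ⟨Φ, h1, h2⟩ := exists_cocycle hP hf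
  obtain ⟨τ, hτ⟩ := exists_tau hP hf Φ h1 h2
  obtain ⟨U, hU⟩ := exists_pot hP hf τ
  obtain ⟨ψ, hψ⟩ := exists_holhom hP hf ⊤ τ Φ (fun k _ => hτ k) (fun k _ l _ => h1 k l) U hU
  let ψ' : G →* _ := ψ.comp Subgroup.topEquiv.symm.toMonoidHom
  refine ⟨ψ'.ker, inferInstance, ?_⟩
  intro k hk C hC hkC
  by_contra hne
  have hk' : ψ ⟨k, trivial⟩ = 1 := hk
  have := hψ ⟨k, trivial⟩ C hC
  rw [hk'] at this
  simp only [hkC, inv_one, mul_one] at this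
  have h3 : Φ k C = 1 := by simpa using this.symm
  have hpos : 0 < P.ncard.factorial := Nat.factorial_pos _
  exact h2 C hC k hkC hne ⟨0, hpos⟩ (by rw [h3]; rfl)

end PartD
section PartE

open scoped Pointwise

universe uu

variable {G : Type uu} [Group G] {P : Set G}

def pairSetoid (H : Subgroup G) : Setoid (Set G × Set G) where
  r x y := ∃ k ∈ H, k • x.1 = y.1 ∧ k • x.2 = y.2
  iseqv := ⟨fun x => ⟨1, H.one_mem, by simp, by simp⟩,
    fun {x y} ⟨k, hk, h1, h2⟩ => ⟨k⁻¹, H.inv_mem hk, by rw [← h1]; simp, by rw [← h2]; simp⟩,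
    fun {x y z} ⟨k, hk, h1, h2⟩ ⟨l, hl, h3, h4⟩ => ⟨l * k, H.mul_mem hl hk,
      by rw [mul_smul, h1, h3], by rw [mul_smul, h2, h4]⟩⟩

/-- words read off walks in the Hasse graph, last letter first -/
theorem path_word (H : Subgroup G)
    (hfree : ∀ k ∈ H, ∀ C ∈ TV P, k • C = C → k = 1)
    (U : Set G → FreeGroup (Quotient (pairSetoid H)))
    (hU : ∀ A C, TCov P A C → U C = FreeGroup.of (Quotient.mk (pairSetoid H) (A, C)) * U A)
    {A C : Set G} (p : (hasseG P).Walk A C) (hp : p.IsPath) :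
    ∃ L : List (Quotient (pairSetoid H) × Bool), FreeGroup.IsReduced L ∧ L.length = p.length ∧
      (U A)  = FreeGroup.mk L * U C ∧
      (∀ x ∈ L.head?, (∃ B, B = p.snd ∧ ((TCov P A B ∧ x = (Quotient.mk (pairSetoid H) (A, B), false)) ∨
        (TCov P B A ∧ x = (Quotient.mk (pairSetoid H) (B, A), true))))) := by
  induction p with
  | nil => exact ⟨[], by simp, rfl, by simp [← FreeGroup.one_eq_mk], by simp⟩
  | @cons A B C h p ih =>
    rw [SimpleGraph.Walk.cons_isPath_iff] at hp
    obtain ⟨L, h1, h2, h3, h4⟩ := ih hp.1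
    obtain ⟨x, hx, hxU⟩ : ∃ x : Quotient (pairSetoid H) × Bool,
        ((TCov P A B ∧ x = (Quotient.mk (pairSetoid H) (A, B), false)) ∨
        (TCov P B A ∧ x = (Quotient.mk (pairSetoid H) (B, A), true))) ∧
        U A = FreeGroup.mk [x] * U B := by
      rcases h with h | h
      · refine ⟨_, Or.inl ⟨h, rfl⟩, ?_⟩
        rw [hU A B h, ← mul_assoc]
        have : FreeGroup.mk [((Quotient.mk (pairSetoid H) (A, B)), false)] =
          (FreeGroup.of (Quotient.mk (pairSetoid H) (A, B)))⁻¹ := rfl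
        rw [this]; simp
      · exact ⟨_, Or.inr ⟨h, rfl⟩, hU B A h⟩
    refine ⟨x :: L, ?_, by simp [h2], ?_, ?_⟩
    · cases L with
      | nil => exact FreeGroup.IsReduced.singleton
      | cons y L =>
        refine List.isChain_cons_cons.2 ?_
        refine ⟨fun hxy => ?_, h1⟩
        obtain ⟨D, hD, hy⟩ := h4 y (by simp)
        have hlen : 0 < p.length := by rw [← h2]; simp
        have hAD : A ≠ D := by
          rintro rfl
          apply hp.2
          rw [hD]
          exact p.getVert_mem_support 1
        rcases hx with ⟨hx, rfl⟩ | ⟨hx, rfl⟩ <;> rcases hy with ⟨hy, rfl⟩ | ⟨hy, rfl⟩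
        · rfl
        · obtain ⟨k, hk, e1, e2⟩ := Quotient.exact hxy
          have := hfree k hk B hx.2.1 e2
          subst this
          simp at e1
          exact (hAD e1).elim
        · obtain ⟨k, hk, e1, e2⟩ := Quotient.exact hxy
          have := hfree k hk B hx.1 e1
          subst this
          simp at e2
          exact (hAD e2).elim
        · rfl
    · rw [hxU, h3, ← mul_assoc, FreeGroup.mul_mk]; rfl
    · intro y hy
      simp at hy
      subst hy
      exact ⟨B, by simp, hx⟩

theorem virt_free (hP : IsPregroupStructure P) (hf : P.Finite) :
    ∃ H : Subgroup G, H.FiniteIndex ∧ ∃ ι : Type uu, Nonempty (H ≃* FreeGroup ι) := by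
  obtain ⟨H, hfi, hfree⟩ := exists_free_subgroup hP hf
  refine ⟨H, hfi, ?_⟩
  obtain ⟨U, hU⟩ := exists_pot hP hf
    (fun A C => FreeGroup.of (Quotient.mk (pairSetoid H) (A, C)))
  obtain ⟨ψ, hψ⟩ := exists_holhom hP hf H _ (fun _ _ => 1) (fun k hk A C _ => by
    have : Quotient.mk (pairSetoid H) (k • A, k • C) = Quotient.mk (pairSetoid H) (A, C) :=
      (Quotient.sound (s := pairSetoid H) (a := (A, C)) (b := (k • A, k • C)) ⟨k, hk, rfl, rfl⟩).symm
    simp only [this, mul_one, one_mul]) (by simp) U hU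
  have hinj : Function.Injective ψ := by
    rw [injective_iff_map_eq_one]
    intro k hk
    have hC : gcl P (1 : G) 1 ∈ TV P := ⟨1, 1, GAdj.rfl' hP 1, rfl⟩
    have h1 := hψ k _ hC
    rw [hk] at h1
    simp only [one_mul, inv_one, mul_one] at h1
    have hreach := hasse_conn hP hf (smul_TV (k : G) hC) hC
    obtain ⟨p, hp⟩ := hreach.exists_isPath
    obtain ⟨L, hL, hlen, hUL, -⟩ := path_word H hfree U hU p hp
    rw [h1] at hUL
    have h2 : FreeGroup.mk L = 1 := by simpa using hUL.symm
    have h3 : L = [] := by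
      have := FreeGroup.Red.exact.1 (h2.trans FreeGroup.one_eq_mk)
      obtain ⟨L', r1, r2⟩ := this
      rw [hL.red_iff_eq] at r1
      rw [FreeGroup.Red.nil_iff] at r2
      rw [← r1, r2]
    rw [h3] at hlen
    have h4 := SimpleGraph.Walk.eq_of_length_eq_zero hlen.symm
    exact Subtype.ext (hfree k k.2 _ hC h4)
  let e := MonoidHom.ofInjective hinj
  exact ⟨_, ⟨e.trans (IsFreeGroup.toFreeGroup ψ.range)⟩⟩

end PartE
section PartF

variable {G : Type*} [Group G] {P : Set G}

/-- reduce a product, keeping a subset of the prefixes -/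
theorem exists_reduced_prefix (hP : IsPregroupStructure P) (n : ℕ) :
    ∀ l : List G, l.length = n → (∀ x ∈ l, x ∈ P) →
    ∃ v, IsReducedProd P v ∧ v.prod = l.prod ∧
      ∀ a b, v = a ++ b → ∃ c d, l = c ++ d ∧ c.prod = a.prod := by
  induction n with
  | zero =>
    intro l hl _
    rw [List.length_eq_zero_iff] at hl
    subst hl
    refine ⟨[1], reduced_one hP, by simp, fun a b h => ⟨[], [], rfl, ?_⟩⟩
    rcases List.singleton_eq_append_iff.1 h with ⟨rfl, -⟩ | ⟨rfl, -⟩ <;> simp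
  | succ n ih =>
    intro l hl hlP
    by_cases hr : IsReducedProd P l
    · exact ⟨l, hr, rfl, fun a b h => ⟨a, b, h, rfl⟩⟩
    · have hne : l ≠ [] := by rintro rfl; simp at hl
      obtain ⟨l1, x, y, l2, rfl, hxy⟩ := not_reduced_split hne hlP hr
      obtain ⟨v, hv, hvp, hpre⟩ := ih (l1 ++ (x * y) :: l2) (by simp at hl ⊢; omega) (by
        intro z hz
        simp only [List.mem_append, List.mem_cons] at hz
        rcases hz with hz | rfl | hz
        · exact hlP z (by simp [hz])
        · exact hxy
        · exact hlP z (by simp [hz]))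
      refine ⟨v, hv, by simp [hvp, mul_assoc], fun a b hab => ?_⟩
      obtain ⟨c, d, hcd, hc⟩ := hpre a b hab
      rcases List.append_eq_append_iff.1 hcd with ⟨e, he, he'⟩ | ⟨e, he, he'⟩
      · rcases List.cons_eq_append_iff.1 he' with ⟨rfl, h⟩ | ⟨e', rfl, h⟩
        · exact ⟨l1, x :: y :: l2, rfl, by rw [← hc, he]; simp⟩
        · exact ⟨l1 ++ x :: y :: e', d, by simp [h], by rw [← hc, he]; simp [mul_assoc]⟩
      · exact ⟨c, e ++ x :: y :: l2, by simp [he], hc⟩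

variable {X : Type*} [MetricSpace X] {S : Set G} {f : G → X}

theorem cay_dist_inv (hf : IsCayleyGraph S f) (k g h : G) : dist (f (k * g)) (f (k * h)) = dist (f g) (f h) := by
  rw [hf.dist_eq, hf.dist_eq]; congr 2; group

theorem ball_finite (hf : IsCayleyGraph S f) (hS : S.Finite) (n : ℕ) :
    {g : G | dist (f 1) (f g) ≤ n}.Finite := by
  let A : Set G := S ∪ S⁻¹
  have hA : A.Finite := hS.union hS.inv
  have hAf : Finite A := hA
  have : ({l : List A | l.length ≤ n}).Finite := List.finite_length_le A n
  refine (this.image (fun l => (l.map Subtype.val).prod)).subset ?_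
  intro g hg
  have hg : dist (f 1) (f g) ≤ n := hg
  rw [hf.dist_eq, inv_one, one_mul] at hg
  have hg' : wordLength S g ≤ n := by exact_mod_cast hg
  have hne : {n | ∃ l : List G, l.length = n ∧ (∀ x ∈ l, x ∈ S ∨ x⁻¹ ∈ S) ∧ l.prod = g}.Nonempty := by
    have : g ∈ Subgroup.closure S := by rw [hf.generates]; trivial
    rw [← Subgroup.mem_toSubmonoid, Subgroup.closure_toSubmonoid] at this
    obtain ⟨l, hl, h⟩ := Submonoid.exists_list_of_mem_closure this
    exact ⟨_, l, rfl, fun x hx => hl x hx, h⟩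
  obtain ⟨l, h1, h2, h3⟩ := Nat.sInf_mem hne
  have h2' : ∀ x ∈ l, x ∈ A := fun x hx => by
    rcases h2 x hx with h | h
    · exact Or.inl h
    · exact Or.inr h
  refine ⟨l.attach.map (fun x => ⟨x.1, h2' x.1 x.2⟩), ?_, ?_⟩
  · simp only [Set.mem_ofPred_eq, List.length_map, List.length_attach]
    rw [h1]; exact hg'
  · simp [List.map_map, Function.comp_def, h3]

def stepRel (f : G → X) (Q : G → Prop) (g h : G) : Prop :=
  dist (f g) (f h) ≤ 2 ∧ Q h

theorem cay_exists_const (hP : IsPregroupStructure P) (hPf : P.Finite) (hf : IsCayleyGraph S f)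
    (hS : S.Finite) : ∃ D : ℝ, 0 ≤ D ∧ (∀ p ∈ P, dist (f 1) (f p) ≤ D) ∧
      ∀ w : G, dist (f 1) (f w) ≤ 2 → ∃ l : List G, (∀ x ∈ l, x ∈ P) ∧ l.prod = w ∧
        ∀ a b, l = a ++ b → dist (f 1) (f a.prod) ≤ D := by
  obtain ⟨K, hK⟩ := (hPf.image (fun p => dist (f 1) (f p))).bddAbove
  choose L hL hLp using fun g => hP.exists_rep g
  have hW : {g : G | dist (f 1) (f g) ≤ 2}.Finite := by exact_mod_cast ball_finite hf hS 2
  have hpre : ∀ w, {q : G | ∃ a b, L w = a ++ b ∧ q = a.prod}.Finite := by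
    intro w
    refine (List.finite_toSet ((L w).inits.map List.prod)).subset ?_
    rintro q ⟨a, b, h, rfl⟩
    refine List.mem_map.2 ⟨a, ?_, rfl⟩
    exact (List.mem_inits _ _).2 ⟨b, h.symm⟩
  obtain ⟨K', hK'⟩ := ((hW.biUnion fun w _ => hpre w).image (fun p => dist (f 1) (f p))).bddAbove
  refine ⟨max 0 (max K K'), le_max_left _ _, fun p hp => ?_, fun w hw => ⟨L w, (hL w).2.1, hLp w, ?_⟩⟩
  · exact (hK ⟨p, hp, rfl⟩).trans ((le_max_left _ _).trans (le_max_right _ _))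
  · intro a b h
    refine le_trans (hK' ⟨a.prod, ?_, rfl⟩) ((le_max_right _ _).trans (le_max_right _ _))
    simp only [Set.mem_iUnion]
    exact ⟨w, hw, a, b, h, rfl⟩

theorem bottleneck (hP : IsPregroupStructure P) (hf : IsCayleyGraph S f) {D : ℝ} (hD0 : 0 ≤ D)
    (hDP : ∀ p ∈ P, dist (f 1) (f p) ≤ D)
    (hDW : ∀ w : G, dist (f 1) (f w) ≤ 2 → ∃ l : List G, (∀ x ∈ l, x ∈ P) ∧ l.prod = w ∧
        ∀ a b, l = a ++ b → dist (f 1) (f a.prod) ≤ D)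
    {Q : G → Prop} {x y : G} (hx : Q x) (hxy : Relation.ReflTransGen (stepRel f Q) x y)
    {u : List G} (hu : IsReducedProd P u) (hup : u.prod = x⁻¹ * y) (j : ℕ) (hj : j ≤ u.length) :
    ∃ g, Q g ∧ dist (f (x * (u.take j).prod)) (f g) ≤ 2 * D := by
  have h1 : ∃ l : List G, (∀ x ∈ l, x ∈ P) ∧ l.prod = x⁻¹ * y ∧ ∀ a b, l = a ++ b →
      ∃ g, Q g ∧ dist (f (x * a.prod)) (f g) ≤ D := by
    clear hup
    have : Q y ∧ ∃ l : List G, (∀ x ∈ l, x ∈ P) ∧ l.prod = x⁻¹ * y ∧ ∀ a b, l = a ++ b →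
      ∃ g, Q g ∧ dist (f (x * a.prod)) (f g) ≤ D := by
      induction hxy with
      | refl =>
        refine ⟨hx, [], by simp, by simp, ?_⟩
        intro a b h
        obtain ⟨rfl, rfl⟩ := List.append_eq_nil_iff.1 h.symm
        exact ⟨x, hx, by simpa using hD0⟩
      | @tail y z hxy hyz ih =>
        obtain ⟨hQy, l, hl, hlp, hpre⟩ := ih
        obtain ⟨m, hm, hmp, hmpre⟩ := hDW (y⁻¹ * z) (by
          rw [← cay_dist_inv hf y]; simpa using hyz.1)
        refine ⟨hyz.2, l ++ m, ?_, by simp [hlp, hmp], ?_⟩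
        · intro t ht
          rcases List.mem_append.1 ht with h | h
          · exact hl t h
          · exact hm t h
        · intro a b hab
          rcases List.append_eq_append_iff.1 hab with ⟨e, he, he'⟩ | ⟨e, he, he'⟩
          · refine ⟨y, hQy, ?_⟩
            have := hmpre e b he'
            rw [he, List.prod_append, hlp, mul_assoc, mul_inv_cancel_left, dist_comm]
            rw [← cay_dist_inv hf y] at this
            simpa using this
          · exact hpre a e he
    exact this.2
  obtain ⟨l, hl, hlp, hpre⟩ := h1
  obtain ⟨v, hv, hvp, hvpre⟩ := exists_reduced_prefix hP _ l rfl hl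
  obtain ⟨hlen, a, ha0, han, haP, hav⟩ := hP.uniq u v hu hv (by rw [hup, hvp, hlp])
  have key : ∀ j, j ≤ u.length → (v.take j).prod = (u.take j).prod * a j := by
    intro j
    induction j with
    | zero => intro _; simp [ha0]
    | succ j ih =>
      intro hj
      rw [List.prod_take_succ _ _ (by omega), List.prod_take_succ _ _ (by omega), ih (by omega),
        (hav j (by omega) (by omega)).2]
      group
  have haj : a j ∈ P := by
    rcases Nat.eq_zero_or_pos j with rfl | h
    · rw [ha0]; exact hP.one_mem
    · rcases hj.eq_or_lt with rfl | h'
      · rw [han]; exact hP.one_mem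
      · exact haP j h h'
  obtain ⟨c, d, hcd, hc⟩ := hvpre (v.take j) (v.drop j) (List.take_append_drop j v).symm
  obtain ⟨g, hg, hgd⟩ := hpre c d hcd
  refine ⟨g, hg, ?_⟩
  have h2 : dist (f (x * (u.take j).prod)) (f (x * c.prod)) ≤ D := by
    rw [hc, key j hj, ← mul_assoc]
    have := hDP _ haj
    rw [← cay_dist_inv hf (x * (u.take j).prod)] at this
    simpa using this
  linarith [dist_triangle (f (x * (u.take j).prod)) (f (x * c.prod)) (f g)]

theorem geod_symm {s : Set X} {x y : X} (h : IsGeodesicSegment s x y) : IsGeodesicSegment s y x := by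
  obtain ⟨F, ⟨h0, h1, h2⟩, rfl⟩ := h
  have hd : dist y x = dist x y := dist_comm _ _
  refine ⟨fun t => F (dist x y - t), ⟨by simp [h1], by simp [hd, h0], ?_⟩, ?_⟩
  · intro a ha b hb
    rw [hd] at ha hb
    rw [h2 _ ⟨by linarith [ha.2], by linarith [ha.1]⟩ _ ⟨by linarith [hb.2], by linarith [hb.1]⟩,
      show dist x y - a - (dist x y - b) = -(a - b) by ring, abs_neg]
  · rw [hd]
    ext z
    constructor
    · rintro ⟨t, ht, rfl⟩
      exact ⟨dist x y - t, ⟨by linarith [ht.2], by linarith [ht.1]⟩, by simp⟩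
    · rintro ⟨t, ht, rfl⟩
      exact ⟨dist x y - t, ⟨by linarith [ht.2], by linarith [ht.1]⟩, rfl⟩

theorem sample (hf : IsCayleyGraph S f) {s : Set X} {x y : X} (hs : IsGeodesicSegment s x y)
    {x' y' : G} (hx : dist x (f x') ≤ 1 / 2) (hy : dist y (f y') ≤ 1 / 2) {Q : G → Prop}
    (hQ : ∀ g, (∃ p ∈ s, dist p (f g) ≤ 1 / 2) → Q g) :
    Relation.ReflTransGen (stepRel f Q) x' y' := by
  obtain ⟨F, ⟨h0, h1, h2⟩, rfl⟩ := hs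
  set ℓ := dist x y with hℓ
  have hℓ0 : 0 ≤ ℓ := dist_nonneg
  obtain ⟨m, hm⟩ := exists_nat_gt ℓ
  have hm0 : m ≠ 0 := by rintro rfl; simp at hm; linarith
  have hmem : ∀ i : ℕ, min (i : ℝ) ℓ ∈ Icc (0 : ℝ) ℓ := fun i =>
    ⟨le_min (Nat.cast_nonneg i) hℓ0, min_le_right _ _⟩
  have hex : ∀ i : ℕ, ∃ g : G, dist (F (min (i : ℝ) ℓ)) (f g) ≤ 1 / 2 ∧ (i = 0 → g = x') ∧
      (i = m → g = y') := by
    intro i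
    rcases eq_or_ne i 0 with rfl | hi
    · exact ⟨x', by simpa [hℓ0, h0] using hx, fun _ => rfl, fun h => (hm0 h.symm).elim⟩
    rcases eq_or_ne i m with rfl | hi'
    · exact ⟨y', by rw [min_eq_right hm.le, h1]; exact hy, fun h => (hi h).elim, fun _ => rfl⟩
    obtain ⟨g, hg⟩ := hf.dense (F (min (i : ℝ) ℓ))
    exact ⟨g, hg, fun h => (hi h).elim, fun h => (hi' h).elim⟩
  choose c hc hc0 hcm using hex
  have step : ∀ i, stepRel f Q (c i) (c (i + 1)) := by
    intro i
    refine ⟨?_, hQ _ ⟨_, ⟨_, hmem (i + 1), rfl⟩, hc (i + 1)⟩⟩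
    have e1 := h2 _ (hmem i) _ (hmem (i + 1))
    have e2 : |min (i : ℝ) ℓ - min ((i + 1 : ℕ) : ℝ) ℓ| ≤ 1 := by
      refine (abs_min_sub_min_le_max _ _ _ _).trans ?_
      push_cast
      simp
    have e3 := dist_triangle4 (f (c i)) (F (min (i : ℝ) ℓ)) (F (min ((i + 1 : ℕ) : ℝ) ℓ)) (f (c (i + 1)))
    have e4 := hc i
    rw [dist_comm] at e4
    linarith [hc (i + 1)]
  have : ∀ i, Relation.ReflTransGen (stepRel f Q) (c 0) (c i) := by
    intro i
    induction i with
    | zero => exact .refl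
    | succ i ih => exact ih.tail (step i)
  have h := this m
  rwa [hc0 0 rfl, hcm m rfl] at h

theorem geod_left_mem {s : Set X} {x y : X} (h : IsGeodesicSegment s x y) : x ∈ s := by
  obtain ⟨F, ⟨h0, h1, h2⟩, rfl⟩ := h
  exact ⟨0, ⟨le_rfl, dist_nonneg⟩, h0⟩

theorem discrete_ivt (t : ℕ → ℝ) (z : ℝ) (n : ℕ) (h0 : t 0 ≤ z) (hn : z ≤ t n) (hn0 : 0 < n) :
    ∃ j < n, t j ≤ z ∧ z ≤ t (j + 1) := by
  induction n with
  | zero => omega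
  | succ n ih =>
    by_cases h : t n ≤ z
    · exact ⟨n, by omega, h, hn⟩
    · push Not at h
      rcases Nat.eq_zero_or_pos n with rfl | hp
      · linarith
      · obtain ⟨j, hj, h'⟩ := ih h.le hp
        exact ⟨j, by omega, h'⟩

theorem thin_side (hP : IsPregroupStructure P) (hf : IsCayleyGraph S f) {D : ℝ} (hD0 : 0 ≤ D)
    (hDP : ∀ p ∈ P, dist (f 1) (f p) ≤ D)
    (hDW : ∀ w : G, dist (f 1) (f w) ≤ 2 → ∃ l : List G, (∀ x ∈ l, x ∈ P) ∧ l.prod = w ∧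
        ∀ a b, l = a ++ b → dist (f 1) (f a.prod) ≤ D)
    {x y z : X} {s t r : Set X} (hs : IsGeodesicSegment s x y) (hr : IsGeodesicSegment r x z)
    (ht : IsGeodesicSegment t z y) : s ⊆ cthickening (9 * D + 2) (r ∪ t) := by
  obtain ⟨x', hx⟩ := hf.dense x
  obtain ⟨y', hy⟩ := hf.dense y
  obtain ⟨z', hz⟩ := hf.dense z
  let Q : G → Prop := fun g => ∃ p ∈ r ∪ t, dist p (f g) ≤ 1 / 2
  let Q' : G → Prop := fun g => ∃ p ∈ s, dist p (f g) ≤ 1 / 2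
  have p1 : Relation.ReflTransGen (stepRel f Q) x' y' :=
    (sample hf hr hx hz (Q := Q) (fun g ⟨p, hp, h⟩ => ⟨p, Or.inl hp, h⟩)).trans
    (sample hf ht hz hy (Q := Q) (fun g ⟨p, hp, h⟩ => ⟨p, Or.inr hp, h⟩))
  have p2 : Relation.ReflTransGen (stepRel f Q') x' y' :=
    sample hf hs hx hy (Q := Q') (fun g h => h)
  have hQx : Q x' := ⟨x, Or.inl (geod_left_mem hr), hx⟩
  have hQx' : Q' x' := ⟨x, geod_left_mem hs, hx⟩
  obtain ⟨u, hu, hup⟩ := hP.exists_rep (x'⁻¹ * y')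
  have b1 := bottleneck hP hf hD0 hDP hDW hQx p1 hu hup
  have b2 := bottleneck hP hf hD0 hDP hDW hQx' p2 hu hup
  obtain ⟨F, ⟨h0, h1, h2⟩, rfl⟩ := hs
  set ℓ := dist x y with hℓ
  have hℓ0 : 0 ≤ ℓ := dist_nonneg
  have hn0 : 0 < u.length := List.length_pos_iff.2 hu.1
  have hex : ∀ j : ℕ, ∃ T : ℝ, j ≤ u.length → T ∈ Icc (0 : ℝ) ℓ ∧
      dist (f (x' * (u.take j).prod)) (F T) ≤ 2 * D + 1 / 2 ∧ (j = 0 → T = 0) ∧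
      (j = u.length → T = ℓ) := by
    intro j
    by_cases hj : j ≤ u.length
    swap
    · exact ⟨0, fun h => (hj h).elim⟩
    rcases eq_or_ne j 0 with rfl | hj0
    · refine ⟨0, fun _ => ⟨⟨le_rfl, hℓ0⟩, ?_, fun _ => rfl, fun h => by omega⟩⟩
      rw [h0, dist_comm]; simp; linarith
    rcases eq_or_ne j u.length with rfl | hjn
    · refine ⟨ℓ, fun _ => ⟨⟨hℓ0, le_rfl⟩, ?_, fun h => by omega, fun _ => rfl⟩⟩
      rw [h1, dist_comm, List.take_length, hup, mul_inv_cancel_left]; linarith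
    obtain ⟨g, ⟨p, ⟨T, hT, rfl⟩, hp⟩, hg⟩ := b2 j hj
    refine ⟨T, fun _ => ⟨hT, ?_, fun h => (hj0 h).elim, fun h => (hjn h).elim⟩⟩
    rw [dist_comm] at hp
    linarith [dist_triangle (f (x' * (u.take j).prod)) (f g) (F T)]
  choose T hT using hex
  rintro _ ⟨w, hw, rfl⟩
  obtain ⟨j, hj, hj1, hj2⟩ := discrete_ivt T w u.length
    (by rw [(hT 0 (by omega)).2.2.1 rfl]; exact hw.1)
    (by rw [(hT _ le_rfl).2.2.2 rfl]; exact hw.2) hn0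
  obtain ⟨m1, d1, -, -⟩ := hT j (by omega)
  obtain ⟨m2, d2, -, -⟩ := hT (j + 1) (by omega)
  have dstep : dist (f (x' * (u.take j).prod)) (f (x' * (u.take (j + 1)).prod)) ≤ D := by
    rw [cay_dist_inv hf, List.prod_take_succ _ _ hj]
    have := hDP u[j] (hu.2.1 _ (List.getElem_mem hj))
    rw [← cay_dist_inv hf (u.take j).prod] at this
    simpa using this
  have d3 : dist (F (T j)) (F (T (j + 1))) ≤ 5 * D + 1 := by
    have := dist_triangle4 (F (T j)) (f (x' * (u.take j).prod)) (f (x' * (u.take (j + 1)).prod))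
      (F (T (j + 1)))
    rw [dist_comm] at d1
    linarith
  rw [h2 _ m1 _ m2, abs_sub_comm, abs_of_nonneg (by linarith)] at d3
  have d4 : dist (F w) (F (T j)) ≤ 5 * D + 1 := by
    rw [h2 _ hw _ m1, abs_of_nonneg (by linarith)]; linarith
  obtain ⟨g, ⟨p, hp, hpg⟩, hg⟩ := b1 j (by omega)
  refine mem_cthickening_of_dist_le _ p _ _ hp ?_
  have e1 := dist_triangle4 (F w) (F (T j)) (f (x' * (u.take j).prod)) (f g)
  have e2 := dist_triangle (F w) (f g) p
  rw [dist_comm] at d1 hpg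
  linarith

end PartF
/-- a group with a pregroup structure over a finite subset is
virtually free; in particular it is word-hyperbolic. -/
theorem finite_pregroup_virtually_free {G : Type u} [Group G]
    (P : Set G) (hP : IsPregroupStructure P) (hPfin : P.Finite) :
    (∃ H : Subgroup G, H.FiniteIndex ∧ ∃ ι : Type u, Nonempty (H ≃* FreeGroup ι)) ∧
      ∀ S : Set G, S.Finite → Subgroup.closure S = ⊤ →
        ∀ (X : Type u) [MetricSpace X], ∀ f : G → X, IsCayleyGraph S f →
          ∃ δ > (0 : ℝ), ∀ x y z : X, ∀ s t r : Set X,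
            IsGeodesicSegment s x y → IsGeodesicSegment t y z →
            IsGeodesicSegment r x z → ThinTriangle δ s t r := by
  refine ⟨virt_free hP hPfin, ?_⟩
  intro S hS _ X _ f hf
  obtain ⟨D, hD0, hDP, hDW⟩ := cay_exists_const hP hPfin hf hS
  refine ⟨9 * D + 2, by linarith, ?_⟩
  intro x y z s t r hs ht hr
  refine ⟨?_, ?_, ?_⟩
  · rw [union_comm]
    exact thin_side hP hf hD0 hDP hDW hs hr (geod_symm ht)
  · exact thin_side hP hf hD0 hDP hDW ht (geod_symm hs) hr
  · exact thin_side hP hf hD0 hDP hDW hr hs ht
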